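/- arXiv:2210.11523 — 7 statements merged into one kernel-verified Lean document; each statement's English description precedes it below -/
import Mathlib

section
/- Let n ≥ 1, let λ ≠ 0 be real, let c : {−n, …, n} → ℂ, and define f : ℝ → ℂ by f(θ) = Σ_{k=−n}^{n} c_k · e^{i k λ θ}. Suppose ξ₁,…,ξ_n ∈ ℝ and β₁,…,β_n ∈ ℝ satisfy Σ_{j=1}^{n} ξ_j · sin(kλβ_j) = k/2 for every k ∈ {1,…,n}. Then for all θ ∈ ℝ, f′(θ) = λ · Σ_{j=1}^{n} ξ_j · (f(θ+β_j) − f(θ−β_j)). -/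
open Complex

/-!
On a single exponential `e(θ) = exp (iωλθ)` the symmetric difference `e(θ + β) - e(θ - β)` is
`2i sin(ωλβ) e(θ)`. Hence `λ ∑ ξ_j (e(θ + β_j) - e(θ - β_j))` is `2iλ (∑ ξ_j sin(ωλβ_j)) e(θ)`,
which is the derivative `iωλ e(θ)` as soon as `∑ ξ_j sin(ωλβ_j) = ω / 2`; linearity extends the rule
to sums of exponentials. Both sides of this condition are odd in `ω`, so for integer frequencies
only the positive ones need to be checked.
-/

theorem cexp_add_mul_I_sub_cexp_sub_mul_I (z w : ℂ) :
    cexp (z + w * I) - cexp (z - w * I) = 2 * I * sin w * cexp z := by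
  rw [sub_eq_add_neg z, ← neg_mul, exp_add, exp_add, exp_mul_I, exp_mul_I, cos_neg, sin_neg]
  ring

theorem hasDerivAt_cexp_mul_ofReal (a : ℂ) (θ : ℝ) :
    HasDerivAt (fun x : ℝ => cexp (a * x)) (a * cexp (a * θ)) θ := by
  simpa [mul_comm] using (ofRealCLM.hasDerivAt (x := θ)).const_mul a |>.cexp

theorem eq_on_Icc_neg_of_odd {A : Type*} [AddCommGroup A] [IsAddTorsionFree A] {f g : ℤ → A}
    (hf : f.Odd) (hg : g.Odd) {n : ℕ} (h : ∀ k ∈ Finset.Icc 1 n, f k = g k) :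
    ∀ k ∈ Finset.Icc (-(n : ℤ)) n, f k = g k := by
  have eq_of_le : ∀ m : ℕ, m ≤ n → f m = g m := by
    intro m hm
    rcases Nat.eq_zero_or_pos m with rfl | hpos
    · rw [Nat.cast_zero, hf.map_zero, hg.map_zero]
    · exact h m (Finset.mem_Icc.2 ⟨hpos, hm⟩)
  intro k hk
  rw [Finset.mem_Icc] at hk
  obtain ⟨m, rfl | rfl⟩ := Int.eq_nat_or_neg k
  · exact eq_of_le m (by lia)
  · rw [hf, hg, eq_of_le m (by lia)]

section ShiftRule

variable {ι : Type*} [Fintype ι] {lam : ℝ} {ξ β : ι → ℝ}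

theorem sum_mul_sin_eq_half_of_pos {n : ℕ}
    (h : ∀ k ∈ Finset.Icc 1 n, ∑ j, ξ j * Real.sin (k * lam * β j) = (k : ℝ) / 2) :
    ∀ k ∈ Finset.Icc (-(n : ℤ)) n, ∑ j, ξ j * Real.sin (k * lam * β j) = (k : ℝ) / 2 := by
  refine eq_on_Icc_neg_of_odd (f := fun k : ℤ => ∑ j, ξ j * Real.sin (k * lam * β j))
    (g := fun k : ℤ => (k : ℝ) / 2) (fun k => ?_) (fun k => ?_) (by simpa using h)
  · simp
  · simp [neg_div]

theorem shift_rule_cexp {ω : ℝ} (h : ∑ j, ξ j * Real.sin (ω * lam * β j) = ω / 2) (θ : ℝ) :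
    lam * ∑ j, (ξ j : ℂ) *
        (cexp (I * ω * lam * (θ + β j : ℝ)) - cexp (I * ω * lam * (θ - β j : ℝ))) =
      I * ω * lam * cexp (I * ω * lam * θ) := by
  have symm_diff (b : ℝ) :
      cexp (I * ω * lam * (θ + b : ℝ)) - cexp (I * ω * lam * (θ - b : ℝ)) =
        2 * I * sin (ω * lam * b) * cexp (I * ω * lam * θ) := by
    rw [← cexp_add_mul_I_sub_cexp_sub_mul_I]
    push_cast
    ring_nf
  have h_complex : ∑ j, (ξ j : ℂ) * sin (ω * lam * β j) = ω / 2 := by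
    exact_mod_cast congrArg ofReal h
  calc
    _ = 2 * I * lam * cexp (I * ω * lam * θ) * ∑ j, (ξ j : ℂ) * sin (ω * lam * β j) := by
      simp only [symm_diff, Finset.mul_sum]
      exact Finset.sum_congr rfl fun j _ => by ring
    _ = I * ω * lam * cexp (I * ω * lam * θ) := by
      rw [h_complex]
      ring

theorem general_shift_rule_general {κ : Type*} {s : Finset κ} {ω : κ → ℝ} {c : κ → ℂ} {f : ℝ → ℂ}
    (hf : ∀ θ : ℝ, f θ = ∑ k ∈ s, c k * cexp (I * ω k * lam * θ))
    (hsys : ∀ k ∈ s, ∑ j, ξ j * Real.sin (ω k * lam * β j) = ω k / 2) (θ : ℝ) :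
    HasDerivAt f (lam * ∑ j, (ξ j : ℂ) * (f (θ + β j) - f (θ - β j))) θ := by
  have hderiv : HasDerivAt f (∑ k ∈ s, c k * (I * ω k * lam * cexp (I * ω k * lam * θ))) θ := by
    rw [funext hf]
    exact HasDerivAt.fun_sum fun k _ => (hasDerivAt_cexp_mul_ofReal _ θ).const_mul (c k)
  convert hderiv using 1
  calc
    _ = ∑ k ∈ s, c k * (lam * ∑ j, (ξ j : ℂ) *
          (cexp (I * ω k * lam * (θ + β j : ℝ)) - cexp (I * ω k * lam * (θ - β j : ℝ)))) := by
      simp only [hf, ← Finset.sum_sub_distrib, ← mul_sub, Finset.mul_sum]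
      rw [Finset.sum_comm]
      exact Finset.sum_congr rfl fun k _ => Finset.sum_congr rfl fun j _ => by ring
    _ = ∑ k ∈ s, c k * (I * ω k * lam * cexp (I * ω k * lam * θ)) :=
      Finset.sum_congr rfl fun k hk => by rw [shift_rule_cexp (hsys k hk)]

end ShiftRule

/-- The generalised 2n-term parameter-shift rule for trigonometric polynomials of
degree at most `n` with frequency scale `λ`. -/
theorem general_shift_rule (n : ℕ) (hn : 1 ≤ n) (lam : ℝ) (hlam : lam ≠ 0)
    (c : ℤ → ℂ) (f : ℝ → ℂ)
    (hf : ∀ θ : ℝ, f θ = ∑ k ∈ Finset.Icc (-(n : ℤ)) (n : ℤ),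
      c k * Complex.exp (I * k * lam * θ))
    (ξ β : Fin n → ℝ)
    (hsys : ∀ k ∈ Finset.Icc 1 n,
      ∑ j, ξ j * Real.sin (k * lam * β j) = (k : ℝ) / 2)
    (θ : ℝ) :
    HasDerivAt f ((lam : ℂ) * ∑ j, (ξ j : ℂ) * (f (θ + β j) - f (θ - β j))) θ :=
  general_shift_rule_general (ω := Int.cast) (by simpa only [ofReal_intCast] using hf)
    (sum_mul_sin_eq_half_of_pos hsys) θ
end

section
/- Let m, n ∈ ℕ and let ξ₁,…,ξ_m ∈ ℝ and α₁,…,α_m ∈ ℝ. The following are equivalent: (1) for every family of coefficients c : {−n,…,n} → ℂ, the function f(θ) = Σ_{k=−n}^{n} c_k e^{ikθ} satisfies f′(θ) = Σ_{j=1}^{m} ξ_j · f(θ + α_j) for all θ ∈ ℝ; (2) for every k ∈ {0, 1, …, n}, Σ_{j=1}^{m} ξ_j · e^{ikα_j} = k·i (as complex numbers). -/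
open Complex

open scoped ComplexConjugate

/-!
Both `d/dz` and `f ↦ ∑ j, ξ j * f (· + α j)` act diagonally on the exponentials `exp (μ * z)`: the
eigenvalues are `μ` and `∑ j, ξ j * exp (μ * α j)`. Hence the two operators agree on an exponential
sum with arbitrary coefficients iff these eigenvalues agree at each of its exponents. When `ξ` and
`α` are real, complex conjugation carries the condition at `I * k` to the condition at `-(I * k)`,
so the nonnegative frequencies suffice.
-/

/-- The exponential sum with exponents `μ k` and coefficients `c k`, for `k ∈ s`. Trigonometric
polynomials of degree at most `n` are the case `s = Finset.Icc (-n) n`, `μ k = I * k`, restricted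
to real arguments. -/
noncomputable def expSum {κ : Type*} (s : Finset κ) (μ c : κ → ℂ) (z : ℂ) : ℂ :=
  ∑ k ∈ s, c k * exp (μ k * z)

/-- The symbol of the operator `f ↦ ∑ j, ξ j * f (· + α j)`: its eigenvalue on the exponential
`z ↦ exp (μ * z)`. -/
noncomputable def shiftSymbol {ι : Type*} [Fintype ι] (ξ α : ι → ℂ) (μ : ℂ) : ℂ :=
  ∑ j, ξ j * exp (μ * α j)

section ExpSum

variable {κ : Type*} (s : Finset κ) (μ c : κ → ℂ)

lemma hasDerivAt_expSum (z : ℂ) :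
    HasDerivAt (expSum s μ c) (expSum s μ (fun k => c k * μ k) z) z := by
  have hasDerivAt_term (k : κ) :
      HasDerivAt (fun w => c k * exp (μ k * w)) (c k * μ k * exp (μ k * z)) z := by
    simpa [mul_assoc, mul_comm (μ k)] using
      ((hasDerivAt_id z).const_mul (μ k)).cexp.const_mul (c k)
  exact HasDerivAt.fun_sum fun k _ => hasDerivAt_term k

lemma sum_mul_expSum_add {ι : Type*} [Fintype ι] (ξ α : ι → ℂ) (z : ℂ) :
    ∑ j, ξ j * expSum s μ c (z + α j) =
      expSum s μ (fun k => c k * shiftSymbol ξ α (μ k)) z := by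
  simp only [expSum, shiftSymbol, Finset.mul_sum, Finset.sum_mul]
  rw [Finset.sum_comm]
  refine Finset.sum_congr rfl fun k _ => Finset.sum_congr rfl fun j _ => ?_
  rw [mul_add, exp_add]
  ring

lemma expSum_single_mul_zero [DecidableEq κ] (a : κ → ℂ) {k : κ} (hk : k ∈ s) :
    expSum s μ (fun l => Pi.single (M := fun _ => ℂ) k 1 l * a l) 0 = a k := by
  simp [expSum, Pi.single_apply, hk]

theorem forall_hasDerivAt_expSum_iff {ι : Type*} [Fintype ι] (ξ α : ι → ℂ) :
    (∀ c : κ → ℂ, ∀ θ : ℝ, HasDerivAt (fun θ : ℝ => expSum s μ c θ)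
      (∑ j, ξ j * expSum s μ c (θ + α j)) θ) ↔
    ∀ k ∈ s, shiftSymbol ξ α (μ k) = μ k := by
  classical
  simp only [sum_mul_expSum_add]
  constructor
  · intro h k hk
    have symbol_eq_deriv := (h (Pi.single k 1) 0).unique (hasDerivAt_expSum s μ _ _).comp_ofReal
    rwa [ofReal_zero, expSum_single_mul_zero s μ (fun l => shiftSymbol ξ α (μ l)) hk,
      expSum_single_mul_zero s μ μ hk] at symbol_eq_deriv
  · intro h c θ
    have symbol_eq_deriv : expSum s μ (fun k => c k * shiftSymbol ξ α (μ k)) θ =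
        expSum s μ (fun k => c k * μ k) θ :=
      Finset.sum_congr rfl fun k hk => by simp only [h k hk]
    rw [symbol_eq_deriv]
    exact (hasDerivAt_expSum s μ c θ).comp_ofReal

end ExpSum

lemma shiftSymbol_conj {ι : Type*} [Fintype ι] (ξ α : ι → ℂ) (μ : ℂ) :
    shiftSymbol (fun j => conj (ξ j)) (fun j => conj (α j)) (conj μ) =
      conj (shiftSymbol ξ α μ) := by
  simp only [shiftSymbol, map_sum, map_mul, ← exp_conj]

lemma shiftSymbol_ofReal_conj_eq {ι : Type*} [Fintype ι] {ξ α : ι → ℝ} {μ : ℂ}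
    (hμ : shiftSymbol (fun j => (ξ j : ℂ)) (fun j => (α j : ℂ)) μ = μ) :
    shiftSymbol (fun j => (ξ j : ℂ)) (fun j => (α j : ℂ)) (conj μ) = conj μ := by
  simpa only [conj_ofReal, hμ] using
    shiftSymbol_conj (fun j => (ξ j : ℂ)) (fun j => (α j : ℂ)) μ

lemma forall_mem_Icc_neg_iff_forall_nat_le {P : ℤ → Prop} (hP : ∀ k, P k → P (-k)) (n : ℕ) :
    (∀ k ∈ Finset.Icc (-(n : ℤ)) n, P k) ↔ ∀ k : ℕ, k ≤ n → P k := by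
  constructor
  · intro h k hk
    exact h k (Finset.mem_Icc.2 (by omega))
  · intro h k hk
    rw [Finset.mem_Icc] at hk
    obtain ⟨l, rfl | rfl⟩ := k.eq_nat_or_neg
    · exact h l (by omega)
    · exact hP l (h l (by omega))

/-- Characterisation of all `m`-term parameter-shift rules for trigonometric
polynomials of degree at most `n`. -/
theorem shift_rule_characterisation (m n : ℕ) (ξ α : Fin m → ℝ) :
    (∀ c : ℤ → ℂ, ∀ θ : ℝ,
      HasDerivAt
        (fun θ : ℝ => ∑ k ∈ Finset.Icc (-(n : ℤ)) (n : ℤ), c k * Complex.exp (I * k * θ))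
        (∑ j, (ξ j : ℂ) *
          ∑ k ∈ Finset.Icc (-(n : ℤ)) (n : ℤ), c k * Complex.exp (I * k * (θ + α j))) θ)
    ↔ (∀ k : ℕ, k ≤ n →
        ∑ j, (ξ j : ℂ) * Complex.exp (I * k * α j) = (k : ℂ) * I) := by
  let symbol : ℂ → ℂ := shiftSymbol (fun j => (ξ j : ℂ)) (fun j => (α j : ℂ))
  have symbol_neg (k : ℤ) (hk : symbol (I * k) = I * k) :
      symbol (I * (-k : ℤ)) = I * (-k : ℤ) := by
    simpa using shiftSymbol_ofReal_conj_eq hk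
  calc
    _ ↔ ∀ k ∈ Finset.Icc (-(n : ℤ)) n, symbol (I * k) = I * k :=
      forall_hasDerivAt_expSum_iff _ (fun k : ℤ => I * k) _ _
    _ ↔ ∀ k : ℕ, k ≤ n → symbol (I * (k : ℤ)) = I * (k : ℤ) :=
      forall_mem_Icc_neg_iff_forall_nat_le symbol_neg n
    _ ↔ _ := by simp only [symbol, shiftSymbol, Int.cast_natCast, mul_comm I]
end

section
/- Define D(θ) to be the diagonal 4×4 complex matrix diag(1, 1, e^{−iθ}, e^{iθ}) (i.e. CR_Z(2θ)) and let U(θ) = D(θ) ⊗ conj(D(θ)) be the 16×16 Kronecker product of D(θ) with its entrywise complex conjugate. Then there do not exist real numbers ξ₁, ξ₂, ξ₃ and real shifts s₁, s₂, s₃ such that for all θ ∈ ℝ every entry of U is differentiable with (d/dθ)U(θ) = ξ₁·U(θ+s₁) + ξ₂·U(θ+s₂) + ξ₃·U(θ+s₃) (entrywise). -/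
open Matrix Complex Kronecker

/-- `CR_Z(2θ) = diag(1, 1, e^{−iθ}, e^{iθ})`. -/
noncomputable def CRZ2 (θ : ℝ) : Matrix (Fin 4) (Fin 4) ℂ :=
  Matrix.diagonal ![1, 1, Complex.exp (-(θ : ℂ) * I), Complex.exp ((θ : ℂ) * I)]

/-- The doubled gate `U(θ) = CR_Z(2θ) ⊗ conj(CR_Z(2θ))`. -/
noncomputable def doubledCRZ (θ : ℝ) : Matrix (Fin 4 × Fin 4) (Fin 4 × Fin 4) ℂ :=
  CRZ2 θ ⊗ₖ (CRZ2 θ).map (starRingEnd ℂ)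

/-!
The diagonal entries of the doubled gate are `z ^ n` for `-2 ≤ n ≤ 2`, where `z = e^{iθ}`. Writing
`x₁, x₂, x₃` for the shifted phases, a shift rule at a single `θ` says that the functional
`f ↦ ∑ i, ξᵢ f(xᵢ)` agrees with `f ↦ i z f'(z)` on the Laurent polynomials with these exponents,
that is, on all `w⁻² P(w)` with `deg P ≤ 4`. Take for `P` the monic polynomial with simple roots
exactly at the distinct points among `z, x₁, x₂, x₃`: the first functional vanishes on it, while the
second does not, because `z` is a simple root.
-/

section Field

open Polynomial

variable {K : Type*} [Field K]

theorem eval_derivative_nodal_ne_zero {ι : Type*} {s : Finset ι} {v : ι → K}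
    (hv : Set.InjOn v s) {i : ι} (hi : i ∈ s) :
    (derivative (Lagrange.nodal s v)).eval (v i) ≠ 0 := by
  classical
  have hweight := Lagrange.nodalWeight_ne_zero hv hi
  rw [Lagrange.nodalWeight_eq_eval_derivative_nodal hi] at hweight
  exact fun hzero ↦ hweight (inv_eq_zero.mpr hzero)

theorem exists_natDegree_le_eval_eq_zero_eval_derivative_ne_zero {ι : Type*} [Fintype ι]
    (x : ι → K) (z : K) :
    ∃ P : K[X], P.natDegree ≤ Fintype.card ι + 1 ∧ (∀ i, P.eval (x i) = 0) ∧
      P.eval z = 0 ∧ (derivative P).eval z ≠ 0 := by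
  classical
  let nodes : Finset K := insert z (Finset.univ.image x)
  have hz : z ∈ nodes := Finset.mem_insert_self _ _
  have hx (i : ι) : x i ∈ nodes :=
    Finset.mem_insert_of_mem (Finset.mem_image_of_mem x (Finset.mem_univ i))
  refine ⟨Lagrange.nodal nodes id, ?_, fun i ↦ Lagrange.eval_nodal_at_node (v := id) (hx i),
    Lagrange.eval_nodal_at_node (v := id) hz,
    eval_derivative_nodal_ne_zero Function.injective_id.injOn hz⟩
  calc (Lagrange.nodal nodes id).natDegree
      = nodes.card := Lagrange.natDegree_nodal
    _ ≤ (Finset.univ.image x).card + 1 := Finset.card_insert_le _ _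
    _ ≤ Fintype.card ι + 1 := Nat.add_le_add_right Finset.card_image_le 1

variable {ι : Type*} [Fintype ι] {ξ x : ι → K} {c z : K}

/- The right-hand side is `c * z * f'(z)` for the Laurent polynomial `f(w) = w ^ k * P(w)`. -/
theorem sum_mul_zpow_mul_eval_eq_of_natDegree_le (hx : ∀ i, x i ≠ 0) (hz : z ≠ 0) {k : ℤ} {N : ℕ}
    (hmonomial : ∀ j ≤ N, ∑ i, ξ i * x i ^ (k + j) = c * (k + j) * z ^ (k + j))
    {P : K[X]} (hP : P.natDegree ≤ N) :
    ∑ i, ξ i * x i ^ k * P.eval (x i) =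
      c * z ^ k * (k * P.eval z + z * (derivative P).eval z) := by
  refine induction_with_natDegree_le (fun P ↦ ∑ i, ξ i * x i ^ k * P.eval (x i) =
    c * z ^ k * (k * P.eval z + z * (derivative P).eval z)) N ?zero ?monomial ?add P hP
  case zero => simp
  case monomial =>
    intro j a _ hj
    have heuler : z * (derivative (C a * X ^ j)).eval z = a * (j * z ^ j) := by
      cases j with
      | zero => simp
      | succ j =>
        simp only [derivative_C_mul, derivative_X_pow, eval_mul, eval_C, eval_pow, eval_X,
          Nat.add_sub_cancel]
        ring
    calc ∑ i, ξ i * x i ^ k * (C a * X ^ j).eval (x i)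
        = a * ∑ i, ξ i * x i ^ (k + j) := by
          rw [Finset.mul_sum]
          refine Finset.sum_congr rfl fun i _ ↦ ?_
          rw [zpow_add₀ (hx i), zpow_natCast, eval_C_mul, eval_X_pow]
          ring
      _ = c * z ^ k * (k * (C a * X ^ j).eval z + z * (derivative (C a * X ^ j)).eval z) := by
          rw [hmonomial j hj, heuler, zpow_add₀ hz, zpow_natCast, eval_C_mul, eval_X_pow]
          ring
  case add =>
    intro P Q _ _ ihP ihQ
    simp only [eval_add, derivative_add, mul_add, Finset.sum_add_distrib, ihP, ihQ]
    ring

theorem exists_sum_mul_zpow_ne (hx : ∀ i, x i ≠ 0) (hz : z ≠ 0) (hc : c ≠ 0) (ξ : ι → K) (k : ℤ) :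
    ∃ j ≤ Fintype.card ι + 1, ∑ i, ξ i * x i ^ (k + j) ≠ c * (k + j) * z ^ (k + j) := by
  by_contra! hmonomial
  obtain ⟨P, hdeg, hPx, hPz, hP'z⟩ := exists_natDegree_le_eval_eq_zero_eval_derivative_ne_zero x z
  have hfunctional := sum_mul_zpow_mul_eval_eq_of_natDegree_le hx hz hmonomial hdeg
  have hvanish : c * z ^ k * (z * (derivative P).eval z) = 0 := by
    simpa [hPx, hPz] using hfunctional.symm
  exact mul_ne_zero (mul_ne_zero hc (zpow_ne_zero k hz)) (mul_ne_zero hz hP'z) hvanish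

end Field

theorem hasDerivAt_exp_mul_I_zpow (n : ℤ) (θ : ℝ) :
    HasDerivAt (fun t : ℝ ↦ exp (t * I) ^ n) (I * n * exp (θ * I) ^ n) θ := by
  simp only [← exp_int_mul]
  have hlinear : HasDerivAt (fun w : ℂ ↦ n * (w * I)) (n * I) θ := by
    simpa using ((hasDerivAt_id (θ : ℂ)).mul_const I).const_mul (n : ℂ)
  exact hlinear.cexp.comp_ofReal.congr_deriv (by ring)

theorem exists_not_hasDerivAt_exp_mul_I_zpow {ι : Type*} [Fintype ι] (ξ : ι → ℂ) (s : ι → ℝ)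
    (θ : ℝ) (k : ℤ) :
    ∃ j ≤ Fintype.card ι + 1, ¬ HasDerivAt (fun t : ℝ ↦ exp (t * I) ^ (k + j : ℤ))
      (∑ i, ξ i * exp ((θ + s i : ℝ) * I) ^ (k + j : ℤ)) θ := by
  obtain ⟨j, hj, hne⟩ := exists_sum_mul_zpow_ne (x := fun i ↦ exp ((θ + s i : ℝ) * I))
    (fun _ ↦ exp_ne_zero _) (exp_ne_zero (θ * I)) I_ne_zero ξ k
  refine ⟨j, hj, fun hrule ↦ hne ?_⟩
  simpa using hrule.unique (hasDerivAt_exp_mul_I_zpow (k + j) θ)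

/-- The frequencies of the gate: the `j`-th diagonal entry of `CRZ2 θ` is `e^{i n θ}` with
`n = crzFrequency j`. -/
def crzFrequency : Fin 4 → ℤ := ![0, 0, -1, 1]

theorem CRZ2_apply_self (θ : ℝ) (j : Fin 4) : CRZ2 θ j j = exp (θ * I) ^ crzFrequency j := by
  fin_cases j <;> simp [CRZ2, crzFrequency, exp_neg]

theorem conj_exp_mul_I_zpow (θ : ℝ) (n : ℤ) :
    starRingEnd ℂ (exp (θ * I) ^ n) = exp (θ * I) ^ (-n) := by
  simp [← exp_conj, exp_neg]

theorem doubledCRZ_apply_self (θ : ℝ) (j l : Fin 4) :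
    doubledCRZ θ (j, l) (j, l) = exp (θ * I) ^ (crzFrequency j - crzFrequency l) := by
  rw [doubledCRZ, kronecker_apply, map_apply, CRZ2_apply_self, CRZ2_apply_self,
    conj_exp_mul_I_zpow, ← zpow_add₀ (exp_ne_zero _), ← sub_eq_add_neg]

theorem exists_crzFrequency_sub_eq {n : ℤ} (hn : |n| ≤ 2) :
    ∃ j l, crzFrequency j - crzFrequency l = n := by
  obtain ⟨hlower, hupper⟩ := abs_le.mp hn
  interval_cases n <;> decide

theorem no_three_term_shift_rule_for_doubled_CRZ_general {ι : Type*} [Fintype ι]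
    (hι : Fintype.card ι ≤ 3) (ξ : ι → ℂ) (s : ι → ℝ) (θ : ℝ) :
    ¬ ∀ p q : Fin 4 × Fin 4, HasDerivAt (fun t : ℝ ↦ doubledCRZ t p q)
      (∑ i, ξ i * doubledCRZ (θ + s i) p q) θ := by
  intro hrule
  obtain ⟨n, hn, hnot⟩ := exists_not_hasDerivAt_exp_mul_I_zpow ξ s θ (-2)
  obtain ⟨j, l, hjl⟩ := exists_crzFrequency_sub_eq (n := -2 + n) (abs_le.mpr (by lia))
  have hentry := hrule (j, l) (j, l)
  simp only [doubledCRZ_apply_self, hjl] at hentry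
  exact hnot hentry

/-- The doubled `CR_Z` gate admits no three-term parameter-shift rule. -/
theorem no_three_term_shift_rule_for_doubled_CRZ :
    ¬ ∃ (ξ₁ ξ₂ ξ₃ s₁ s₂ s₃ : ℝ),
      ∀ (θ : ℝ) (p q : Fin 4 × Fin 4),
        HasDerivAt (fun t : ℝ => doubledCRZ t p q)
          ((ξ₁ : ℂ) * doubledCRZ (θ + s₁) p q +
           (ξ₂ : ℂ) * doubledCRZ (θ + s₂) p q +
           (ξ₃ : ℂ) * doubledCRZ (θ + s₃) p q) θ := by
  rintro ⟨ξ₁, ξ₂, ξ₃, s₁, s₂, s₃, hrule⟩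
  exact no_three_term_shift_rule_for_doubled_CRZ_general (Fintype.card_fin 3).le ![ξ₁, ξ₂, ξ₃]
    ![s₁, s₂, s₃] 0 fun p q ↦ by simpa [Fin.sum_univ_three] using hrule 0 p q
end

section
/- In the setting of the single-layer Sim₁ ansatz on n qubits with Pauli labels P : {1,…,n} → {X, Y, Z, I}, state ψ(θ¹,θ²), Pauli-string Hamiltonian H, and expectation f(θ¹,θ²) = ⟨ψ, Hψ⟩ as above, let m = #{ j : P_j ≠ I } be the number of measured (non-identity) qubits. Then for every i ∈ {1,…,n}, the average of (∂f/∂θ¹_i)² over (θ¹,θ²) uniformly distributed on [−π,π]^{2n} is at most (1/2)^m, and likewise the average of (∂f/∂θ²_i)² is at most (1/2)^m. In particular, if a proportion Θ(n) of the qubits are measured, the gradient variance vanishes exponentially in n (a barren plateau). -/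
open Matrix Complex MeasureTheory

namespace Sim1

/-- Pauli labels. -/
inductive Pauli | X | Y | Z | I
  deriving DecidableEq

/-- The 2×2 Pauli matrices. -/
noncomputable def Pauli.mat : Pauli → Matrix (Fin 2) (Fin 2) ℂ
  | .X => !![0, 1; 1, 0]
  | .Y => !![0, -Complex.I; Complex.I, 0]
  | .Z => !![1, 0; 0, -1]
  | .I => !![1, 0; 0, 1]

/-- The rotation gate `R_X(a)`. -/
noncomputable def RX (a : ℝ) : Matrix (Fin 2) (Fin 2) ℂ :=
  !![(Real.cos (a / 2) : ℂ), -Complex.I * (Real.sin (a / 2) : ℂ);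
     -Complex.I * (Real.sin (a / 2) : ℂ), (Real.cos (a / 2) : ℂ)]

/-- The rotation gate `R_Z(b) = diag(e^{−ib/2}, e^{ib/2})`. -/
noncomputable def RZ (b : ℝ) : Matrix (Fin 2) (Fin 2) ℂ :=
  !![Complex.exp (-((b / 2 : ℝ) : ℂ) * Complex.I), 0;
     0, Complex.exp (((b / 2 : ℝ) : ℂ) * Complex.I)]

/-- The `n`-qubit state of a single layer of the Sim₁ ansatz:
`ψ(x) = ∏_j (R_Z(θ²_j) R_X(θ¹_j))_{x_j, 0}`. -/
noncomputable def psi (n : ℕ) (θ1 θ2 : Fin n → ℝ) : (Fin n → Fin 2) → ℂ :=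
  fun x => ∏ j, (RZ (θ2 j) * RX (θ1 j)) (x j) 0

/-- The Pauli-string Hamiltonian `H(x,y) = ∏_j (P_j)_{x_j, y_j}`. -/
noncomputable def ham (n : ℕ) (P : Fin n → Pauli) :
    Matrix (Fin n → Fin 2) (Fin n → Fin 2) ℂ :=
  Matrix.of fun x y => ∏ j, (P j).mat (x j) (y j)

/-- The (real) expectation value `f(θ¹,θ²) = ⟨ψ, Hψ⟩`. -/
noncomputable def f (n : ℕ) (P : Fin n → Pauli) (θ1 θ2 : Fin n → ℝ) : ℝ :=
  (star (psi n θ1 θ2) ⬝ᵥ (ham n P *ᵥ psi n θ1 θ2)).re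

/-- The average of a function of the parameters `(θ¹, θ²)` uniformly
distributed on `[−π,π]^{2n}`. -/
noncomputable def avg (n : ℕ) (g : (Fin n → ℝ) × (Fin n → ℝ) → ℝ) : ℝ :=
  (1 / (2 * Real.pi) ^ (2 * n)) *
    ∫ θ in ((Set.univ.pi fun _ : Fin n => Set.Icc (-Real.pi) Real.pi) ×ˢ
            (Set.univ.pi fun _ : Fin n => Set.Icc (-Real.pi) Real.pi)), g θ

/-- The squared partial derivative `(∂f/∂θ¹_i)²`. -/
noncomputable def gradSq1 (n : ℕ) (P : Fin n → Pauli) (i : Fin n) :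
    (Fin n → ℝ) × (Fin n → ℝ) → ℝ :=
  fun θ => (deriv (fun t => f n P (Function.update θ.1 i t) θ.2) (θ.1 i)) ^ 2

/-- The squared partial derivative `(∂f/∂θ²_i)²`. -/
noncomputable def gradSq2 (n : ℕ) (P : Fin n → Pauli) (i : Fin n) :
    (Fin n → ℝ) × (Fin n → ℝ) → ℝ :=
  fun θ => (deriv (fun t => f n P θ.1 (Function.update θ.2 i t)) (θ.2 i)) ^ 2


/-!
The state of the ansatz and the Hamiltonian are both tensor products, so `f` is the product over the
qubits of the Bloch coordinates `(sin a sin b, -sin a cos b, cos a)` selected by the Pauli labels.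
Each coordinate splits into a function of the polar angle `a` times a function of the azimuth `b`.
A partial derivative differentiates one factor and leaves the others alone, hence its mean square is
a product of one-dimensional mean squares. Azimuthal factors and their derivatives have mean square
at most `1`, while for a measured qubit the polar factor and its derivative are `± sin` or `± cos`,
of mean square `1/2`: every measured qubit contributes a factor at most `1/2`.
-/

section ProductTensors

variable {ι R : Type*} {κ : ι → Type*} [Fintype ι] [DecidableEq ι] [∀ j, Fintype (κ j)]
  [CommSemiring R]

lemma prod_dotProduct_prod (φ ψ : ∀ j, κ j → R) :
    (fun x : ∀ j, κ j => ∏ j, φ j (x j)) ⬝ᵥ (fun x => ∏ j, ψ j (x j)) = ∏ j, φ j ⬝ᵥ ψ j := by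
  simp only [dotProduct, ← Finset.prod_mul_distrib, Finset.prod_univ_sum, Fintype.piFinset_univ]

lemma prod_mulVec_prod {η : ι → Type*} (A : ∀ j, Matrix (η j) (κ j) R) (ψ : ∀ j, κ j → R) :
    (Matrix.of fun (x : ∀ j, η j) (y : ∀ j, κ j) => ∏ j, A j (x j) (y j)) *ᵥ
        (fun y => ∏ j, ψ j (y j)) =
      fun x => ∏ j, (A j *ᵥ ψ j) (x j) :=
  funext fun x => prod_dotProduct_prod (fun j => A j (x j)) ψ

end ProductTensors

section BlochCoordinates

variable (φ : Fin 2 → ℂ)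

lemma star_dotProduct_pauliX_mulVec :
    star φ ⬝ᵥ (Pauli.X.mat *ᵥ φ) = ((2 * (star (φ 0) * φ 1).re : ℝ) : ℂ) := by
  rw [← add_conj]
  simp [Pauli.mat, dotProduct, mulVec, Fin.sum_univ_two, mul_comm]

lemma star_dotProduct_pauliY_mulVec :
    star φ ⬝ᵥ (Pauli.Y.mat *ᵥ φ) = ((2 * (star (φ 0) * φ 1).im : ℝ) : ℂ) := by
  apply Complex.ext <;> simp [Pauli.mat, dotProduct, mulVec, Fin.sum_univ_two] <;> ring

lemma star_dotProduct_pauliZ_mulVec :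
    star φ ⬝ᵥ (Pauli.Z.mat *ᵥ φ) = ((normSq (φ 0) - normSq (φ 1) : ℝ) : ℂ) := by
  simp [Pauli.mat, dotProduct, mulVec, Fin.sum_univ_two, normSq_eq_conj_mul_self, sub_eq_add_neg]

lemma star_dotProduct_pauliI_mulVec :
    star φ ⬝ᵥ (Pauli.I.mat *ᵥ φ) = ((normSq (φ 0) + normSq (φ 1) : ℝ) : ℂ) := by
  simp [Pauli.mat, dotProduct, mulVec, Fin.sum_univ_two, normSq_eq_conj_mul_self]

end BlochCoordinates

/-- The one-qubit state `R_Z(b) R_X(a) |0⟩`, as its vector of amplitudes. -/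
noncomputable def qubit (a b : ℝ) : Fin 2 → ℂ :=
  fun s => (RZ b * RX a) s 0

lemma qubit_zero (a b : ℝ) :
    qubit a b 0 = Complex.exp (-((b / 2 : ℝ) : ℂ) * Complex.I) * (Real.cos (a / 2) : ℂ) := by
  simp [qubit, RZ, RX, Matrix.mul_apply]

lemma qubit_one (a b : ℝ) :
    qubit a b 1 =
      Complex.exp (((b / 2 : ℝ) : ℂ) * Complex.I) * (-Complex.I * (Real.sin (a / 2) : ℂ)) := by
  simp [qubit, RZ, RX, Matrix.mul_apply]

lemma normSq_qubit_zero (a b : ℝ) : normSq (qubit a b 0) = Real.cos (a / 2) ^ 2 := by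
  rw [qubit_zero, ← ofReal_neg, normSq_eq_norm_sq, norm_mul, norm_exp_ofReal_mul_I, one_mul,
    norm_real, Real.norm_eq_abs, sq_abs]

lemma normSq_qubit_one (a b : ℝ) : normSq (qubit a b 1) = Real.sin (a / 2) ^ 2 := by
  rw [qubit_one, normSq_eq_norm_sq, norm_mul, norm_exp_ofReal_mul_I, one_mul, norm_mul, norm_neg,
    norm_I, one_mul, norm_real, Real.norm_eq_abs, sq_abs]

lemma star_qubit_zero_mul_qubit_one (a b : ℝ) :
    star (qubit a b 0) * qubit a b 1 =
      ((Real.sin a / 2 : ℝ) : ℂ) * (-Complex.I * Complex.exp (b * Complex.I)) := by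
  have exp_half_mul_exp_half : Complex.exp (((b / 2 : ℝ) : ℂ) * Complex.I) *
      Complex.exp (((b / 2 : ℝ) : ℂ) * Complex.I) = Complex.exp (b * Complex.I) := by
    rw [← Complex.exp_add]
    push_cast
    ring_nf
  have sin_eq : Real.sin a / 2 = Real.sin (a / 2) * Real.cos (a / 2) := by
    rw [← mul_div_cancel₀ a (two_ne_zero' ℝ), Real.sin_two_mul]
    ring_nf
  have star_qubit_zero : star (qubit a b 0) =
      Complex.exp (((b / 2 : ℝ) : ℂ) * Complex.I) * (Real.cos (a / 2) : ℂ) := by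
    rw [qubit_zero, star_mul', star_def, ← exp_conj, conj_ofReal, map_mul, map_neg, conj_ofReal,
      conj_I, neg_mul_neg]
  rw [star_qubit_zero, qubit_one, sin_eq, ← exp_half_mul_exp_half, ofReal_mul]
  ring

/-- The dependence of the Bloch coordinate `⟨P⟩` of `qubit a b` on the polar angle `a`; for the
identity label the coordinate is the squared norm `1`. -/
noncomputable def Pauli.polar : Pauli → ℝ → ℝ
  | .X => Real.sin
  | .Y => Real.sin
  | .Z => Real.cos
  | .I => fun _ => 1

/-- The dependence of the Bloch coordinate `⟨P⟩` of `qubit a b` on the azimuth `b`. The azimuth is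
measured from the negative `Y`-axis, since `R_X` first tilts `|0⟩` towards `-Y`. -/
noncomputable def Pauli.azimuthal : Pauli → ℝ → ℝ
  | .X => Real.sin
  | .Y => fun b => -Real.cos b
  | .Z => fun _ => 1
  | .I => fun _ => 1

lemma star_qubit_dotProduct_mulVec_qubit (p : Pauli) (a b : ℝ) :
    star (qubit a b) ⬝ᵥ (p.mat *ᵥ qubit a b) = ((p.polar a * p.azimuthal b : ℝ) : ℂ) := by
  cases p with
  | X =>
    have re_eq : (-Complex.I * Complex.exp (b * Complex.I)).re = Real.sin b := by
      simp [exp_ofReal_mul_I_im]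
    rw [star_dotProduct_pauliX_mulVec, star_qubit_zero_mul_qubit_one, re_ofReal_mul, re_eq,
      Pauli.polar, Pauli.azimuthal]
    ring_nf
  | Y =>
    have im_eq : (-Complex.I * Complex.exp (b * Complex.I)).im = -Real.cos b := by
      simp [exp_ofReal_mul_I_re]
    rw [star_dotProduct_pauliY_mulVec, star_qubit_zero_mul_qubit_one, im_ofReal_mul, im_eq,
      Pauli.polar, Pauli.azimuthal]
    ring_nf
  | Z =>
    rw [star_dotProduct_pauliZ_mulVec, normSq_qubit_zero, normSq_qubit_one, ← Real.cos_two_mul',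
      mul_div_cancel₀ a two_ne_zero, Pauli.polar, Pauli.azimuthal, mul_one]
  | I =>
    rw [star_dotProduct_pauliI_mulVec, normSq_qubit_zero, normSq_qubit_one, Real.cos_sq_add_sin_sq,
      Pauli.polar, Pauli.azimuthal, mul_one]

lemma f_eq_prod_polar_mul_prod_azimuthal {n : ℕ} (P : Fin n → Pauli) (θ₁ θ₂ : Fin n → ℝ) :
    f n P θ₁ θ₂ = (∏ j, (P j).polar (θ₁ j)) * ∏ j, (P j).azimuthal (θ₂ j) := by
  have psi_eq : psi n θ₁ θ₂ = fun x => ∏ j, qubit (θ₁ j) (θ₂ j) (x j) := rfl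
  have star_psi_eq : star (psi n θ₁ θ₂) = fun x => ∏ j, star (qubit (θ₁ j) (θ₂ j)) (x j) :=
    funext fun _ => star_prod _ _
  rw [f, star_psi_eq, psi_eq, ham, prod_mulVec_prod, prod_dotProduct_prod]
  simp only [star_qubit_dotProduct_mulVec_qubit]
  rw [← ofReal_prod, ofReal_re, Finset.prod_mul_distrib]

lemma deriv_prod_comp_update {ι 𝕜 𝕜' : Type*} [Fintype ι] [DecidableEq ι]
    [NontriviallyNormedField 𝕜] [NormedField 𝕜'] [NormedAlgebra 𝕜 𝕜'] (g : ι → 𝕜 → 𝕜') (i : ι)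
    (x : ι → 𝕜) :
    deriv (fun t => ∏ j, g j (Function.update x i t j)) (x i) =
      ∏ j, Function.update g i (deriv (g i)) j (x j) := by
  simp only [Function.apply_update g, Function.apply_update fun j (h : 𝕜 → 𝕜') => h (x j),
    Finset.prod_update_of_mem (Finset.mem_univ i), deriv_mul_const_field]

section Average

variable {𝕜 : Type*} [RCLike 𝕜]

lemma average_prod_mul {α β : Type*} [MeasurableSpace α] [MeasurableSpace β] {μ : Measure α}
    {ν : Measure β} [SFinite μ] [SFinite ν] (g : α → 𝕜) (h : β → 𝕜) :
    ⨍ z, g z.1 * h z.2 ∂μ.prod ν = (⨍ x, g x ∂μ) * ⨍ y, h y ∂ν := by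
  rw [average_eq, average_eq, average_eq, integral_prod_mul, ← Set.univ_prod_univ,
    measureReal_prod_prod, mul_inv, smul_mul_smul_comm]

lemma average_fintype_prod {ι : Type*} [Fintype ι] {α : ι → Type*} [∀ j, MeasurableSpace (α j)]
    {μ : ∀ j, Measure (α j)} [∀ j, SigmaFinite (μ j)] (g : ∀ j, α j → 𝕜) :
    ⨍ x, ∏ j, g j (x j) ∂Measure.pi μ = ∏ j, ⨍ t, g j t ∂μ j := by
  simp only [average_eq, integral_fintype_prod_eq_prod, measureReal_def, Measure.pi_univ,
    ENNReal.toReal_prod, ← Finset.prod_inv_distrib, Finset.prod_smul]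

end Average

lemma avg_eq_average (n : ℕ) (g : (Fin n → ℝ) × (Fin n → ℝ) → ℝ) :
    avg n g = ⨍ θ, g θ ∂
      (Measure.pi fun _ : Fin n => volume.restrict (Set.Icc (-Real.pi) Real.pi)).prod
        (Measure.pi fun _ : Fin n => volume.restrict (Set.Icc (-Real.pi) Real.pi)) := by
  have volume_real_cube : (volume : Measure (Fin n → ℝ)).real
      (Set.univ.pi fun _ => Set.Icc (-Real.pi) Real.pi) = (2 * Real.pi) ^ n := by
    rw [measureReal_def, volume_pi_pi]
    simp [Real.pi_nonneg, two_mul]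
  rw [← Measure.restrict_pi_pi, ← volume_pi, Measure.prod_restrict, ← Measure.volume_eq_prod,
    setAverage_eq, Measure.volume_eq_prod, measureReal_prod_prod, volume_real_cube, ← pow_add,
    ← two_mul n, avg, one_div, smul_eq_mul, Measure.volume_eq_prod]

/-- The mean of `g ^ 2` over an angle uniformly distributed on `[-π, π]`. -/
noncomputable def meanSq (g : ℝ → ℝ) : ℝ :=
  ⨍ t in Set.Icc (-Real.pi) Real.pi, g t ^ 2

lemma meanSq_nonneg (g : ℝ → ℝ) : 0 ≤ meanSq g :=
  integral_nonneg fun t => sq_nonneg (g t)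

lemma meanSq_eq_intervalIntegral (g : ℝ → ℝ) :
    meanSq g = (2 * Real.pi)⁻¹ * ∫ t in (-Real.pi)..Real.pi, g t ^ 2 := by
  rw [meanSq, setAverage_eq, integral_Icc_eq_integral_Ioc,
    ← intervalIntegral.integral_of_le (neg_le_self Real.pi_nonneg)]
  simp [Real.pi_nonneg, two_mul]

lemma meanSq_neg (g : ℝ → ℝ) : meanSq (fun t => -g t) = meanSq g := by
  simp only [meanSq, neg_sq]

lemma meanSq_const (c : ℝ) : meanSq (fun _ => c) = c ^ 2 := by
  rw [meanSq_eq_intervalIntegral, intervalIntegral.integral_const, smul_eq_mul]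
  field_simp
  ring

lemma meanSq_sin : meanSq Real.sin = 1 / 2 := by
  rw [meanSq_eq_intervalIntegral, integral_sin_sq, Real.sin_neg, Real.sin_pi]
  field_simp
  ring

lemma meanSq_cos : meanSq Real.cos = 1 / 2 := by
  rw [meanSq_eq_intervalIntegral, integral_cos_sq, Real.sin_neg, Real.sin_pi]
  field_simp
  ring

lemma meanSq_polar_le (p : Pauli) : meanSq p.polar ≤ if p ≠ Pauli.I then 1 / 2 else 1 := by
  cases p <;> simp [Pauli.polar, meanSq_sin, meanSq_cos, meanSq_const]

lemma meanSq_deriv_polar_le (p : Pauli) :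
    meanSq (deriv p.polar) ≤ if p ≠ Pauli.I then 1 / 2 else 1 := by
  cases p <;> simp [Pauli.polar, meanSq_sin, meanSq_cos, meanSq_const, meanSq_neg]

lemma meanSq_azimuthal_le_one (p : Pauli) : meanSq p.azimuthal ≤ 1 := by
  cases p <;> simp [Pauli.azimuthal, meanSq_sin, meanSq_cos, meanSq_const, meanSq_neg] <;> norm_num

lemma meanSq_deriv_azimuthal_le_one (p : Pauli) : meanSq (deriv p.azimuthal) ≤ 1 := by
  cases p <;> simp [Pauli.azimuthal, meanSq_sin, meanSq_cos, meanSq_const] <;> norm_num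

lemma avg_sq_prod_mul_prod {n : ℕ} (U V : Fin n → ℝ → ℝ) :
    avg n (fun θ => ((∏ j, U j (θ.1 j)) * ∏ j, V j (θ.2 j)) ^ 2) =
      (∏ j, meanSq (U j)) * ∏ j, meanSq (V j) := by
  simp only [avg_eq_average, mul_pow, ← Finset.prod_pow]
  rw [average_prod_mul (fun x : Fin n → ℝ => ∏ j, U j (x j) ^ 2)
      (fun y : Fin n → ℝ => ∏ j, V j (y j) ^ 2),
    average_fintype_prod fun j t => U j t ^ 2, average_fintype_prod fun j t => V j t ^ 2]
  rfl

lemma avg_sq_prod_mul_prod_le {n : ℕ} (s : Fin n → Prop) [DecidablePred s] {r : ℝ}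
    {U V : Fin n → ℝ → ℝ} (hU : ∀ j, meanSq (U j) ≤ if s j then r else 1)
    (hV : ∀ j, meanSq (V j) ≤ 1) :
    avg n (fun θ => ((∏ j, U j (θ.1 j)) * ∏ j, V j (θ.2 j)) ^ 2) ≤
      r ^ (Finset.univ.filter s).card := by
  calc
    _ = (∏ j, meanSq (U j)) * ∏ j, meanSq (V j) := avg_sq_prod_mul_prod U V
    _ ≤ ∏ j, meanSq (U j) :=
      mul_le_of_le_one_right (Finset.prod_nonneg fun j _ => meanSq_nonneg (U j))
        (Finset.prod_le_one (fun j _ => meanSq_nonneg (V j)) fun j _ => hV j)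
    _ ≤ ∏ j, if s j then r else 1 :=
      Finset.prod_le_prod (fun j _ => meanSq_nonneg (U j)) fun j _ => hU j
    _ = r ^ (Finset.univ.filter s).card := by rw [← Finset.prod_filter, Finset.prod_const]

section Gradient

variable {n : ℕ} (P : Fin n → Pauli) (i : Fin n)

lemma gradSq1_eq (θ : (Fin n → ℝ) × (Fin n → ℝ)) :
    gradSq1 n P i θ =
      ((∏ j, Function.update (fun k => (P k).polar) i (deriv (P i).polar) j (θ.1 j)) *
        ∏ j, (P j).azimuthal (θ.2 j)) ^ 2 := by
  simp only [gradSq1, f_eq_prod_polar_mul_prod_azimuthal, deriv_mul_const_field,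
    deriv_prod_comp_update (fun k => (P k).polar)]

lemma gradSq2_eq (θ : (Fin n → ℝ) × (Fin n → ℝ)) :
    gradSq2 n P i θ =
      ((∏ j, (P j).polar (θ.1 j)) * ∏ j,
        Function.update (fun k => (P k).azimuthal) i (deriv (P i).azimuthal) j (θ.2 j)) ^ 2 := by
  simp only [gradSq2, f_eq_prod_polar_mul_prod_azimuthal, deriv_const_mul_field,
    deriv_prod_comp_update (fun k => (P k).azimuthal)]

lemma avg_gradSq1_le :
    avg n (gradSq1 n P i) ≤ (1 / 2) ^ (Finset.univ.filter fun j => P j ≠ Pauli.I).card := by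
  rw [funext (gradSq1_eq P i)]
  refine avg_sq_prod_mul_prod_le _ ?_ fun j => meanSq_azimuthal_le_one (P j)
  exact (Function.forall_update_iff _ fun j g => meanSq g ≤ if P j ≠ Pauli.I then 1 / 2 else 1).mpr
    ⟨meanSq_deriv_polar_le (P i), fun j _ => meanSq_polar_le (P j)⟩

lemma avg_gradSq2_le :
    avg n (gradSq2 n P i) ≤ (1 / 2) ^ (Finset.univ.filter fun j => P j ≠ Pauli.I).card := by
  rw [funext (gradSq2_eq P i)]
  refine avg_sq_prod_mul_prod_le _ (fun j => meanSq_polar_le (P j)) ?_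
  exact (Function.forall_update_iff _ fun _ g => meanSq g ≤ 1).mpr
    ⟨meanSq_deriv_azimuthal_le_one (P i), fun j _ => meanSq_azimuthal_le_one (P j)⟩

end Gradient

/-- Gradient-variance bound for the single-layer Sim₁ ansatz: with `m` measured
(non-identity) qubits, the variance of every partial derivative is at most
`(1/2)^m`; in particular measuring `Θ(n)` qubits yields a barren plateau. -/
theorem sim1_gradient_variance_bound (n : ℕ) (hn : 1 ≤ n) (P : Fin n → Pauli) (i : Fin n)
    (m : ℕ) (hm : m = (Finset.univ.filter fun j => P j ≠ Pauli.I).card) :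
    avg n (gradSq1 n P i) ≤ (1 / 2 : ℝ) ^ m ∧
    avg n (gradSq2 n P i) ≤ (1 / 2 : ℝ) ^ m := by
  subst hm
  exact ⟨avg_gradSq1_le P i, avg_gradSq2_le P i⟩

end Sim1
end

section
/- Fix n ≥ 2. Let Had = (1/√2)·[[1,1],[1,−1]], let CZ_{j,j+1} denote the controlled-Z gate diag(1,1,1,−1) acting on qubits j and j+1, and let R_X(a) = [[cos(a/2), −i sin(a/2)],[−i sin(a/2), cos(a/2)]]. For θ ∈ ℝⁿ define the n-qubit unitary U(θ) = (⊗_{j=1}^{n} R_X(θ_j)) · (∏_{j=1}^{n−1} CZ_{j,j+1}) · Had^{⊗n} (the CZ gates pairwise commute), let ψ(θ) = U(θ)·|0…0⟩, and let f(θ) = ⟨ψ(θ), Z^{⊗n}·ψ(θ)⟩ where Z = [[1,0],[0,−1]]. Then for every i ∈ {1,…,n}, the average of (∂f/∂θ_i)² over θ uniformly distributed on [−π,π]ⁿ is at most 1/2^{n−1}; in particular the Sim₉ ansatz has a barren plateau for H = Z^{⊗n}. -/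
open Matrix Complex MeasureTheory

namespace Sim9

/-- The Hadamard gate. -/
noncomputable def Had : Matrix (Fin 2) (Fin 2) ℂ :=
  ((1 / Real.sqrt 2 : ℝ) : ℂ) • !![1, 1; 1, -1]

/-- The rotation gate `R_X(a)`. -/
noncomputable def RX (a : ℝ) : Matrix (Fin 2) (Fin 2) ℂ :=
  !![(Real.cos (a / 2) : ℂ), -Complex.I * (Real.sin (a / 2) : ℂ);
     -Complex.I * (Real.sin (a / 2) : ℂ), (Real.cos (a / 2) : ℂ)]

/-- The Pauli `Z` matrix. -/
def Zmat : Matrix (Fin 2) (Fin 2) ℂ := !![1, 0; 0, -1]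

/-- Tensor (Kronecker) product of `n` single-qubit gates, as a `2ⁿ×2ⁿ` matrix
indexed by bit strings. -/
noncomputable def tens (n : ℕ) (A : Fin n → Matrix (Fin 2) (Fin 2) ℂ) :
    Matrix (Fin n → Fin 2) (Fin n → Fin 2) ℂ :=
  Matrix.of fun x y => ∏ j, A j (x j) (y j)

/-- The diagonal of the controlled-Z gate acting on qubits `j` and `j+1`. -/
noncomputable def CZdiag (n : ℕ) (j : Fin (n - 1)) : (Fin n → Fin 2) → ℂ := fun x =>
  if x ⟨j.1, Nat.lt_of_lt_of_le j.2 (Nat.sub_le n 1)⟩ = 1 ∧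
     x ⟨j.1 + 1, by have := j.2; omega⟩ = 1 then -1 else 1

/-- The controlled-Z gate acting on qubits `j` and `j+1`. -/
noncomputable def CZpair (n : ℕ) (j : Fin (n - 1)) :
    Matrix (Fin n → Fin 2) (Fin n → Fin 2) ℂ :=
  Matrix.diagonal (CZdiag n j)

/-- The product `∏_{j=1}^{n−1} CZ_{j,j+1}` of the pairwise commuting (diagonal)
controlled-Z gates on adjacent qubits. -/
noncomputable def CZchain (n : ℕ) : Matrix (Fin n → Fin 2) (Fin n → Fin 2) ℂ :=
  Matrix.diagonal fun x => ∏ j, CZdiag n j x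

/-- A single layer of the Sim₉ ansatz:
`U(θ) = (⊗_j R_X(θ_j)) · (∏_j CZ_{j,j+1}) · Had^{⊗n}`. -/
noncomputable def U (n : ℕ) (θ : Fin n → ℝ) :
    Matrix (Fin n → Fin 2) (Fin n → Fin 2) ℂ :=
  tens n (fun j => RX (θ j)) * CZchain n * tens n (fun _ => Had)

/-- The all-zeros state `|0…0⟩`. -/
def ket0 (n : ℕ) : (Fin n → Fin 2) → ℂ := fun x => if (∀ j, x j = 0) then 1 else 0

/-- The expectation value `f(θ) = ⟨ψ(θ), Z^{⊗n} ψ(θ)⟩` with `ψ(θ) = U(θ)|0…0⟩`. -/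
noncomputable def f (n : ℕ) (θ : Fin n → ℝ) : ℝ :=
  (star (U n θ *ᵥ ket0 n) ⬝ᵥ (tens n (fun _ => Zmat) *ᵥ (U n θ *ᵥ ket0 n))).re

/-- Average of a function of the parameters `θ` uniformly distributed on `[−π,π]ⁿ`. -/
noncomputable def avg (n : ℕ) (g : (Fin n → ℝ) → ℝ) : ℝ :=
  (1 / (2 * Real.pi) ^ n) *
    ∫ θ in (Set.univ.pi fun _ : Fin n => Set.Icc (-Real.pi) Real.pi), g θ

/-!
Conjugation by `R_X(a)` turns `Z` into `cos a • Z + sin a • Y`, so `f` is a sum over `s : {0,1}ⁿ` of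
products of `cos θ_j` (where `s_j = 0`) and `sin θ_j` (where `s_j = 1`), whose coefficient is the
expectation of the Pauli string `P_s` (`Z` where `s_j = 0`, `Y` where `s_j = 1`) in the linear
cluster state. Differentiating in `θ_i` is shifting `θ_i` by `π / 2`, and the `2ⁿ` products are
orthogonal with mean square `2⁻ⁿ`, so the gradient variance is `2⁻ⁿ` times the sum of the squared
coefficients. Each coefficient has modulus at most `1`, and it vanishes unless
`s_{k-1} + s_{k+1} = 1` modulo `2` for every `k` (entries out of range being `0`), a recursion whose
solutions are determined by their first entry. Hence at most two coefficients survive.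
-/

section TrigonometricProducts

/-- The trigonometric basis functions `cos` (index `0`) and `sin` (index `1`), the coefficients of
`Z` and `Y` in `R_X(a)† Z R_X(a)`. -/
noncomputable def cosSin : Fin 2 → ℝ → ℝ := ![Real.cos, Real.sin]

lemma continuous_cosSin (b : Fin 2) : Continuous (cosSin b) := by
  fin_cases b
  exacts [Real.continuous_cos, Real.continuous_sin]

lemma periodic_cosSin (b : Fin 2) : Function.Periodic (cosSin b) (2 * Real.pi) := by
  fin_cases b
  exacts [Real.cos_periodic, Real.sin_periodic]

lemma hasDerivAt_cosSin (b : Fin 2) (a : ℝ) :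
    HasDerivAt (cosSin b) (cosSin b (a + Real.pi / 2)) a := by
  fin_cases b
  · simpa [cosSin, Real.cos_add_pi_div_two] using Real.hasDerivAt_cos a
  · simpa [cosSin, Real.sin_add_pi_div_two] using Real.hasDerivAt_sin a

lemma integral_cosSin_mul_cosSin (b b' : Fin 2) :
    ∫ a in (-Real.pi)..Real.pi, cosSin b a * cosSin b' a = if b = b' then Real.pi else 0 := by
  fin_cases b <;> fin_cases b' <;>
    simp [cosSin, ← pow_two, integral_sin_mul_cos₁, mul_comm (Real.cos _)]

lemma integral_Icc_cosSin_add_mul_cosSin_add (c : ℝ) (b b' : Fin 2) :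
    ∫ a in Set.Icc (-Real.pi) Real.pi, cosSin b (a + c) * cosSin b' (a + c) =
      if b = b' then Real.pi else 0 := by
  have periodic_mul : Function.Periodic (fun a => cosSin b a * cosSin b' a) (2 * Real.pi) :=
    (periodic_cosSin b).mul (periodic_cosSin b')
  have shift := periodic_mul.intervalIntegral_add_eq (-Real.pi + c) (-Real.pi)
  rw [integral_Icc_eq_integral_Ioc, ← intervalIntegral.integral_of_le (by linarith [Real.pi_pos]),
    intervalIntegral.integral_comp_add_right (fun a => cosSin b a * cosSin b' a),
    ← integral_cosSin_mul_cosSin]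
  convert shift using 2 <;> ring

end TrigonometricProducts

section ProductFunctions

variable {ι β : Type*} [Fintype ι]

lemma prod_apply_update {M : Type*} [CommMonoid M] [DecidableEq ι] (φ : ι → β → M) (θ : ι → β)
    (i : ι) (t : β) :
    ∏ j, φ j (Function.update θ i t j) = φ i t * ∏ j ∈ Finset.univ \ {i}, φ j (θ j) := by
  simp only [Function.apply_update (fun j => φ j), Finset.prod_update_of_mem (Finset.mem_univ i)]

variable {α : ι → Type*} [∀ j, MeasurableSpace (α j)] {μ : ∀ j, Measure (α j)}
  [∀ j, SigmaFinite (μ j)] [DecidableEq β]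

lemma integral_prod_mul_prod_of_orthogonal {φ : ∀ j, β → α j → ℝ} {κ : ι → ℝ}
    (orthogonal : ∀ j b b', ∫ a, φ j b a * φ j b' a ∂μ j = if b = b' then κ j else 0)
    (s t : ι → β) :
    ∫ θ, (∏ j, φ j (s j) (θ j)) * ∏ j, φ j (t j) (θ j) ∂Measure.pi μ =
      if s = t then ∏ j, κ j else 0 := by
  simp_rw [← Finset.prod_mul_distrib]
  rw [integral_fintype_prod_eq_prod (fun j a => φ j (s j) a * φ j (t j) a)]
  simp only [orthogonal, Finset.prod_ite_zero, Finset.mem_univ, forall_const, funext_iff]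

lemma integral_sq_sum_prod_of_orthogonal [DecidableEq ι] [Fintype β]
    {φ : ∀ j, β → α j → ℝ} {κ : ι → ℝ}
    (integrable : ∀ j b b', Integrable (fun a => φ j b a * φ j b' a) (μ j))
    (orthogonal : ∀ j b b', ∫ a, φ j b a * φ j b' a ∂μ j = if b = b' then κ j else 0)
    (c : (ι → β) → ℝ) :
    ∫ θ, (∑ s, c s * ∏ j, φ j (s j) (θ j)) ^ 2 ∂Measure.pi μ = (∏ j, κ j) * ∑ s, c s ^ 2 := by
  have integrable_mul (s t : ι → β) : Integrable (fun θ : ∀ j, α j =>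
      c s * c t * ((∏ j, φ j (s j) (θ j)) * ∏ j, φ j (t j) (θ j))) (Measure.pi μ) := by
    simp_rw [← Finset.prod_mul_distrib]
    exact (Integrable.fintype_prod_dep (f := fun j a => φ j (s j) a * φ j (t j) a)
      fun j => integrable j (s j) (t j)).const_mul _
  simp_rw [pow_two, Finset.sum_mul_sum, mul_mul_mul_comm (c _)]
  rw [integral_finsetSum _ fun s _ => integrable_finsetSum _ fun t _ => integrable_mul s t,
    Finset.mul_sum]
  refine Finset.sum_congr rfl fun s _ => ?_
  rw [integral_finsetSum _ fun t _ => integrable_mul s t]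
  simp_rw [integral_const_mul, integral_prod_mul_prod_of_orthogonal orthogonal]
  simp [mul_comm]

end ProductFunctions

section TensorProducts

variable {n : ℕ}

lemma tens_mul_tens (A B : Fin n → Matrix (Fin 2) (Fin 2) ℂ) :
    tens n A * tens n B = tens n (fun j => A j * B j) := by
  ext x y
  simp only [tens, Matrix.mul_apply, Matrix.of_apply, ← Finset.prod_mul_distrib,
    Finset.prod_univ_sum, Fintype.piFinset_univ]

lemma conjTranspose_tens (A : Fin n → Matrix (Fin 2) (Fin 2) ℂ) :
    (tens n A)ᴴ = tens n (fun j => (A j)ᴴ) := by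
  ext x y
  simp [tens, Matrix.conjTranspose_apply]

lemma tens_sum_smul {β : Type*} [Fintype β] (c : Fin n → β → ℂ)
    (A : Fin n → β → Matrix (Fin 2) (Fin 2) ℂ) :
    tens n (fun j => ∑ b, c j b • A j b) =
      ∑ s : Fin n → β, (∏ j, c j (s j)) • tens n (fun j => A j (s j)) := by
  ext x y
  simp only [tens, Matrix.sum_apply, Matrix.smul_apply, Matrix.of_apply, smul_eq_mul,
    ← Finset.prod_mul_distrib, Finset.prod_univ_sum, Fintype.piFinset_univ]

lemma star_mulVec_dotProduct_mulVec_mulVec {m k R : Type*} [Fintype m] [Fintype k]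
    [NonUnitalSemiring R] [StarRing R] (A : Matrix m k R) (H : Matrix m m R) (v : k → R) :
    star (A *ᵥ v) ⬝ᵥ (H *ᵥ (A *ᵥ v)) = star v ⬝ᵥ ((Aᴴ * H * A) *ᵥ v) := by
  rw [Matrix.star_mulVec, ← Matrix.dotProduct_mulVec, Matrix.mulVec_mulVec, Matrix.mulVec_mulVec,
    Matrix.mul_assoc]

end TensorProducts

section ClusterState

lemma addChar_map_sum {ι A M : Type*} [AddCommMonoid A] [CommMonoid M] (ψ : AddChar A M)
    (s : Finset ι) (g : ι → A) : ψ (∑ i ∈ s, g i) = ∏ i ∈ s, ψ (g i) :=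
  map_prod ψ.toMonoidHom (fun i => Multiplicative.ofAdd (g i)) s

/-- The nontrivial character `b ↦ (-1)ᵇ` of `ℤ/2`. -/
noncomputable def bitSign : AddChar (Fin 2) ℂ where
  toFun b := (-1) ^ (b : ℕ)
  map_zero_eq_one' := rfl
  map_add_eq_mul' a b := by fin_cases a <;> fin_cases b <;> simp

lemma bitSign_apply (b : Fin 2) : bitSign b = (-1) ^ (b : ℕ) := rfl

lemma bitSign_eq_one_iff {b : Fin 2} : bitSign b = 1 ↔ b = 0 := by
  fin_cases b <;> norm_num [bitSign_apply]

lemma star_bitSign (b : Fin 2) : star (bitSign b) = bitSign b := by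
  fin_cases b <;> simp [bitSign_apply]

variable {n : ℕ}

/-- The first qubit of the `j`-th controlled-Z gate. -/
abbrev gateFst (j : Fin (n - 1)) : Fin n := ⟨j.1, Nat.lt_of_lt_of_le j.2 (Nat.sub_le n 1)⟩

/-- The second qubit of the `j`-th controlled-Z gate. -/
abbrev gateSnd (j : Fin (n - 1)) : Fin n := ⟨j.1 + 1, by have := j.2; omega⟩

/-- The bilinear form `∑ⱼ x_j y_{j+1}` over `ℤ/2`; the chain of controlled-Z gates multiplies the
basis vector `x` by `(-1)` to the power `chainForm x x`. -/
def chainForm (x y : Fin n → Fin 2) : Fin 2 := ∑ j : Fin (n - 1), x (gateFst j) * y (gateSnd j)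

lemma chainForm_add_left (x x' y : Fin n → Fin 2) :
    chainForm (x + x') y = chainForm x y + chainForm x' y := by
  simp only [chainForm, Pi.add_apply, add_mul, Finset.sum_add_distrib]

lemma chainForm_add_right (x y y' : Fin n → Fin 2) :
    chainForm x (y + y') = chainForm x y + chainForm x y' := by
  simp only [chainForm, Pi.add_apply, mul_add, Finset.sum_add_distrib]

lemma chainForm_single_gateFst (j : Fin (n - 1)) (y : Fin n → Fin 2) :
    chainForm (Pi.single (gateFst j) 1) y = y (gateSnd j) := by
  simp [chainForm, Pi.single_apply, ← Fin.ext_iff]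

lemma chainForm_single_right_congr {s t : Fin n → Fin 2} {k : Fin n} (h : ∀ m < k, s m = t m) :
    chainForm s (Pi.single k 1) = chainForm t (Pi.single k 1) := by
  refine Finset.sum_congr rfl fun j _ => ?_
  obtain rfl | hj := eq_or_ne (gateSnd j) k
  · rw [h (gateFst j) (by simp [Fin.lt_def])]
  · simp [hj]

lemma prod_CZdiag (x : Fin n → Fin 2) : ∏ j, CZdiag n j x = bitSign (chainForm x x) := by
  have ite_eq_bitSign_mul (a b : Fin 2) :
      (if a = 1 ∧ b = 1 then (-1 : ℂ) else 1) = bitSign (a * b) := by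
    fin_cases a <;> fin_cases b <;> simp [bitSign_apply]
  simp only [chainForm, addChar_map_sum, CZdiag, ite_eq_bitSign_mul]

/-- The linear cluster state: the Hadamard gates followed by the chain of controlled-Z gates,
applied to `|0…0⟩`. -/
noncomputable def clusterState (n : ℕ) (x : Fin n → Fin 2) : ℂ :=
  bitSign (chainForm x x) * ((1 / Real.sqrt 2 : ℝ) : ℂ) ^ n

lemma star_clusterState : star (clusterState n) = clusterState n := by
  funext x
  simp only [Pi.star_apply, clusterState, star_mul', star_bitSign, star_pow]
  simp

lemma tens_Had_mulVec_ket0 :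
    tens n (fun _ => Had) *ᵥ ket0 n = fun _ => ((1 / Real.sqrt 2 : ℝ) : ℂ) ^ n := by
  have ket0_eq : ket0 n = Pi.single 0 1 := by
    funext x
    simp [ket0, Pi.single_apply, funext_iff]
  have Had_zero_right (b : Fin 2) : Had b 0 = ((1 / Real.sqrt 2 : ℝ) : ℂ) := by
    fin_cases b <;> simp [Had]
  funext x
  simp [ket0_eq, tens, Had_zero_right]

lemma U_mulVec_ket0 (θ : Fin n → ℝ) :
    U n θ *ᵥ ket0 n = tens n (fun j => RX (θ j)) *ᵥ clusterState n := by
  rw [U, ← Matrix.mulVec_mulVec, ← Matrix.mulVec_mulVec, tens_Had_mulVec_ket0]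
  congr 1
  funext x
  simp only [CZchain, Matrix.mulVec_diagonal, prod_CZdiag, clusterState]

end ClusterState

section PauliStrings

/-- The Pauli matrices `Z` (index `0`) and `Y` (index `1`). -/
noncomputable def pauliZY : Fin 2 → Matrix (Fin 2) (Fin 2) ℂ := ![Zmat, !![0, -I; I, 0]]

lemma RX_conjTranspose_mul_Zmat_mul_RX (a : ℝ) :
    (RX a)ᴴ * Zmat * RX a = ∑ b, (cosSin b a : ℂ) • pauliZY b := by
  have cos_eq : Real.cos a = Real.cos (a / 2) ^ 2 - Real.sin (a / 2) ^ 2 := by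
    rw [← Real.cos_two_mul']; ring_nf
  have sin_eq : Real.sin a = 2 * Real.sin (a / 2) * Real.cos (a / 2) := by
    rw [← Real.sin_two_mul]; ring_nf
  simp only [cosSin, pauliZY, Fin.sum_univ_two, Matrix.cons_val_zero, Matrix.cons_val_one, cos_eq,
    sin_eq, RX, Zmat]
  ext x y
  fin_cases x <;> fin_cases y <;>
    simp [Matrix.mul_apply, Fin.sum_univ_two, Complex.ext_iff, pow_two, -Complex.ofReal_cos,
      -Complex.ofReal_sin] <;> ring

lemma pauliZY_apply (b x y : Fin 2) :
    pauliZY b x y = if x = y + b then I ^ (b : ℕ) * bitSign y else 0 := by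
  fin_cases b <;> fin_cases x <;> fin_cases y <;> simp [pauliZY, Zmat, bitSign_apply]

variable {n : ℕ}

lemma tens_pauliZY_apply (s x y : Fin n → Fin 2) :
    tens n (fun j => pauliZY (s j)) x y =
      if x = y + s then (∏ j, I ^ (s j : ℕ)) * bitSign (∑ j, y j) else 0 := by
  simp only [tens, Matrix.of_apply, pauliZY_apply, Finset.prod_ite_zero, Finset.mem_univ,
    forall_const, Finset.prod_mul_distrib, addChar_map_sum, funext_iff, Pi.add_apply]

/-- The expectation value, in the cluster state, of the Pauli string with `Z` on the qubits where
`s` is `0` and `Y` on those where `s` is `1`. -/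
noncomputable def pauliCoeff (n : ℕ) (s : Fin n → Fin 2) : ℂ :=
  star (clusterState n) ⬝ᵥ (tens n (fun j => pauliZY (s j)) *ᵥ clusterState n)

lemma f_eq_sum_pauliCoeff (θ : Fin n → ℝ) :
    f n θ = ∑ s, (pauliCoeff n s).re * ∏ j, cosSin (s j) (θ j) := by
  rw [f, U_mulVec_ket0, star_mulVec_dotProduct_mulVec_mulVec, conjTranspose_tens, tens_mul_tens,
    tens_mul_tens]
  simp only [RX_conjTranspose_mul_Zmat_mul_RX, tens_sum_smul, Matrix.sum_mulVec,
    Matrix.smul_mulVec, dotProduct_sum, dotProduct_smul, smul_eq_mul, ← Complex.ofReal_prod,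
    Complex.re_sum, Complex.re_ofReal_mul, pauliCoeff, mul_comm]

/-- The linear form `y ↦ ∑ₖ (s_{k-1} + s_{k+1} + 1) y_k` over `ℤ/2`, the exponent of the sign
relating the amplitudes at `y` and `y + s` in the expectation value `pauliCoeff n s`. -/
def stabilizerForm (s : Fin n → Fin 2) : (Fin n → Fin 2) →+ Fin 2 :=
  AddMonoidHom.mk' (fun y => chainForm s y + chainForm y s + ∑ j, y j) fun y z => by
    simp only [chainForm_add_left, chainForm_add_right, Pi.add_apply, Finset.sum_add_distrib]
    abel

lemma clusterState_add_mul_clusterState (s y : Fin n → Fin 2) :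
    clusterState n (y + s) * bitSign (∑ j, y j) * clusterState n y =
      (1 / 2) ^ n * bitSign (chainForm s s) * bitSign (stabilizerForm s y) := by
  have inv_sqrt_two_sq : ((1 / Real.sqrt 2 : ℝ) : ℂ) * ((1 / Real.sqrt 2 : ℝ) : ℂ) = 1 / 2 := by
    rw [← Complex.ofReal_mul, div_mul_div_comm, Real.mul_self_sqrt zero_le_two]
    norm_num
  have add_self_cancel : ∀ a b c d e : Fin 2, a + b + (c + d) + e + a = d + (b + c + e) := by
    decide
  have exponent_eq : chainForm (y + s) (y + s) + ∑ j, y j + chainForm y y =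
      chainForm s s + stabilizerForm s y := by
    simp only [chainForm_add_left, chainForm_add_right, stabilizerForm, AddMonoidHom.mk'_apply,
      add_self_cancel]
  have sign_eq := congrArg bitSign exponent_eq
  simp only [AddChar.map_add_eq_mul] at sign_eq
  rw [← inv_sqrt_two_sq, mul_pow]
  unfold clusterState
  linear_combination ((1 / Real.sqrt 2 : ℝ) : ℂ) ^ n * ((1 / Real.sqrt 2 : ℝ) : ℂ) ^ n * sign_eq

lemma pauliCoeff_eq (s : Fin n → Fin 2) :
    pauliCoeff n s = (∏ j, I ^ (s j : ℕ)) * (1 / 2) ^ n * bitSign (chainForm s s) *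
      ∑ y, bitSign.compAddMonoidHom (stabilizerForm s) y := by
  simp only [pauliCoeff, star_clusterState, dotProduct, Matrix.mulVec, tens_pauliZY_apply,
    ite_mul, zero_mul, Finset.mul_sum, mul_ite, mul_zero]
  rw [Finset.sum_comm]
  refine Finset.sum_congr rfl fun y _ => ?_
  rw [Finset.sum_ite_eq' Finset.univ, if_pos (Finset.mem_univ _)]
  rw [AddChar.compAddMonoidHom_apply]
  linear_combination (∏ j, I ^ (s j : ℕ)) * clusterState_add_mul_clusterState s y

lemma norm_pauliCoeff_le_one (s : Fin n → Fin 2) : ‖pauliCoeff n s‖ ≤ 1 := by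
  have norm_sum_le_two_pow :
      ‖∑ y, bitSign.compAddMonoidHom (stabilizerForm s) y‖ ≤ 2 ^ n := by
    refine (norm_sum_le _ _).trans ?_
    simp
  calc ‖pauliCoeff n s‖
      = (1 / 2) ^ n * ‖∑ y, bitSign.compAddMonoidHom (stabilizerForm s) y‖ := by
        simp [pauliCoeff_eq]
    _ ≤ (1 / 2) ^ n * 2 ^ n := by gcongr
    _ = 1 := by rw [← mul_pow]; norm_num

lemma stabilizerForm_eq_zero {s : Fin n → Fin 2} (hs : pauliCoeff n s ≠ 0) :
    stabilizerForm s = 0 := by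
  rw [pauliCoeff_eq] at hs
  have trivial_char := AddChar.sum_ne_zero_iff_eq_zero.1 (right_ne_zero_of_mul hs)
  refine AddMonoidHom.ext fun y => ?_
  exact bitSign_eq_one_iff.1 (DFunLike.congr_fun trivial_char y)

lemma eq_of_stabilizerForm_eq [NeZero n] {s t : Fin n → Fin 2}
    (h : stabilizerForm s = stabilizerForm t) (h0 : s 0 = t 0) : s = t := by
  funext k
  induction k using WellFoundedLT.induction with
  | ind k ih =>
    obtain ⟨_ | k, hk⟩ := k
    · exact h0
    · let j : Fin (n - 1) := ⟨k, by omega⟩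
      have congr_left := chainForm_single_right_congr (s := s) (t := t) (k := gateFst j)
        fun m hm => ih m (hm.trans (by simp [j, Fin.lt_def]))
      have forms_eq := DFunLike.congr_fun h (Pi.single (gateFst j) 1)
      simpa only [stabilizerForm, AddMonoidHom.mk'_apply, congr_left, chainForm_single_gateFst,
        add_left_inj, add_right_inj] using forms_eq

lemma card_pauliCoeff_ne_zero_le_two (n : ℕ) [NeZero n] :
    (Finset.univ.filter fun s => pauliCoeff n s ≠ 0).card ≤ 2 := by
  have injOn_zero : Set.InjOn (fun s : Fin n → Fin 2 => s 0)
      (Finset.univ.filter fun s => pauliCoeff n s ≠ 0) := by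
    intro s hs t ht h0
    rw [Finset.mem_coe, Finset.mem_filter_univ] at hs ht
    exact eq_of_stabilizerForm_eq
      ((stabilizerForm_eq_zero hs).trans (stabilizerForm_eq_zero ht).symm) h0
  exact Finset.card_le_card_of_injOn _ (fun _ _ => Finset.mem_univ _) injOn_zero

lemma sum_sq_re_pauliCoeff_le_two (n : ℕ) [NeZero n] :
    ∑ s, (pauliCoeff n s).re ^ 2 ≤ 2 := by
  have sq_re_le_one (s : Fin n → Fin 2) : (pauliCoeff n s).re ^ 2 ≤ 1 :=
    (sq_le_one_iff_abs_le_one _).2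
      ((Complex.abs_re_le_norm _).trans (norm_pauliCoeff_le_one s))
  calc ∑ s, (pauliCoeff n s).re ^ 2
      = ∑ s with pauliCoeff n s ≠ 0, (pauliCoeff n s).re ^ 2 :=
        (Finset.sum_filter_of_ne fun s _ h => by contrapose! h; simp [h]).symm
    _ ≤ (Finset.univ.filter fun s => pauliCoeff n s ≠ 0).card • (1 : ℝ) :=
        Finset.sum_le_card_nsmul _ _ _ fun s _ => sq_re_le_one s
    _ ≤ 2 := by
        rw [nsmul_one]
        exact_mod_cast card_pauliCoeff_ne_zero_le_two n

end PauliStrings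

section GradientVariance

variable (n : ℕ)

-- The parameter-shift rule; its two shifted values merge into one since `f (θ + π eᵢ) = -f θ`.
lemma deriv_f_update (i : Fin n) (θ : Fin n → ℝ) :
    deriv (fun t => f n (Function.update θ i t)) (θ i) = f n (θ + Pi.single i (Real.pi / 2)) := by
  have add_single_eq : θ + Pi.single i (Real.pi / 2) =
      Function.update θ i (θ i + Real.pi / 2) := by
    funext j
    obtain rfl | hj := eq_or_ne j i <;> simp [*]
  have prod_split (s : Fin n → Fin 2) := prod_apply_update (fun j => cosSin (s j)) θ i
  simp only [add_single_eq, f_eq_sum_pauliCoeff, prod_split]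
  exact (HasDerivAt.fun_sum fun s _ =>
    ((hasDerivAt_cosSin (s i) (θ i)).mul_const _).const_mul _).deriv

lemma avg_sq_f_add (φ : Fin n → ℝ) :
    avg n (fun θ => f n (θ + φ) ^ 2) = 1 / 2 ^ n * ∑ s, (pauliCoeff n s).re ^ 2 := by
  have integrable (j : Fin n) (b b' : Fin 2) :
      IntegrableOn (fun a => cosSin b (a + φ j) * cosSin b' (a + φ j))
        (Set.Icc (-Real.pi) Real.pi) :=
    (((continuous_cosSin b).comp (continuous_add_const _)).mul
      ((continuous_cosSin b').comp (continuous_add_const _))).continuousOn.integrableOn_compact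
      isCompact_Icc
  simp only [avg, f_eq_sum_pauliCoeff, Pi.add_apply]
  rw [volume_pi, Measure.restrict_pi_pi, integral_sq_sum_prod_of_orthogonal integrable
    fun j => integral_Icc_cosSin_add_mul_cosSin_add (φ j)]
  rw [Finset.prod_const, Finset.card_fin, mul_pow]
  field_simp

end GradientVariance

/-- The single-layer Sim₉ ansatz has a barren plateau for `H = Z^{⊗n}`: the
gradient variance is at most `1/2^{n−1}`. -/
theorem sim9_barren_plateau (n : ℕ) (hn : 2 ≤ n) (i : Fin n) :
    avg n (fun θ => (deriv (fun t => f n (Function.update θ i t)) (θ i)) ^ 2) ≤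
      1 / 2 ^ (n - 1) := by
  have : NeZero n := ⟨by omega⟩
  have two_pow_eq : (2 : ℝ) ^ n = 2 * 2 ^ (n - 1) := by rw [← pow_succ']; congr 1; omega
  simp only [deriv_f_update]
  rw [avg_sq_f_add]
  calc 1 / 2 ^ n * ∑ s, (pauliCoeff n s).re ^ 2
      ≤ 1 / 2 ^ n * 2 := by gcongr; exact sum_sq_re_pauliCoeff_le_two n
    _ = 1 / 2 ^ (n - 1) := by rw [two_pow_eq]; field_simp

end Sim9
end

section
/- Define sequences a, b : ℕ → ℝ by a(0) = 1/2, b(0) = 0, a(l+1) = (3·a(l) − b(l))/4, and b(l+1) = (b(l) − a(l))/2. Then for every l ∈ ℕ, a(l) = (2·4^l + 1)/(6·4^l) and b(l) = −(4^l − 1)/(3·4^l). -/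
/-!
The matrix of the recurrence has eigenvalues `1` and `1 / 4`, with left eigenvectors `(2, -1)` and
`(1, 1)`. Hence `2 * a - b` is conserved, `a + b` is divided by `4` at each step, and `a`, `b` are
recovered from these two combinations.
-/

theorem eq_div_pow_of_succ_eq_div {G : Type*} [DivisionMonoid G] {u : ℕ → G} {r : G}
    (hu : ∀ n, u (n + 1) = u n / r) (n : ℕ) : u n = u 0 / r ^ n := by
  induction n with
  | zero => rw [pow_zero, div_one]
  | succ n ih => rw [hu, ih, pow_succ', div_mul_eq_div_div_swap]

section Recurrence

variable {K : Type*} [Field K] [NeZero (2 : K)] {a b : ℕ → K}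

theorem two_mul_sub_eq_of_recurrence (ha : ∀ l, a (l + 1) = (3 * a l - b l) / 4)
    (hb : ∀ l, b (l + 1) = (b l - a l) / 2) (l : ℕ) :
    2 * a l - b l = 2 * a 0 - b 0 := by
  have four_eq : (4 : K) = 2 * 2 := by norm_num
  induction l with
  | zero => rfl
  | succ l ih =>
    rw [← ih, ha, hb, four_eq]
    field_simp
    ring

theorem add_eq_div_four_pow_of_recurrence (ha : ∀ l, a (l + 1) = (3 * a l - b l) / 4)
    (hb : ∀ l, b (l + 1) = (b l - a l) / 2) (l : ℕ) :
    a l + b l = (a 0 + b 0) / 4 ^ l := by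
  have four_eq : (4 : K) = 2 * 2 := by norm_num
  refine eq_div_pow_of_succ_eq_div (u := fun l ↦ a l + b l) (fun l ↦ ?_) l
  rw [ha, hb, four_eq]
  field_simp
  ring

theorem iqp1_recurrence_closed_form_general [NeZero (3 : K)]
    (ha : ∀ l, a (l + 1) = (3 * a l - b l) / 4) (hb : ∀ l, b (l + 1) = (b l - a l) / 2) (l : ℕ) :
    a l = ((2 * a 0 - b 0) + (a 0 + b 0) / 4 ^ l) / 3 ∧
      b l = (2 * ((a 0 + b 0) / 4 ^ l) - (2 * a 0 - b 0)) / 3 := by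
  rw [← two_mul_sub_eq_of_recurrence ha hb l, ← add_eq_div_four_pow_of_recurrence ha hb l]
  constructor <;> rw [eq_div_iff three_ne_zero] <;> ring

end Recurrence

/-- Closed form for the recurrence arising in the multi-layer barren-plateau
analysis of the IQP₁ ansatz. -/
theorem iqp1_recurrence_closed_form (a b : ℕ → ℝ)
    (ha0 : a 0 = 1 / 2) (hb0 : b 0 = 0)
    (ha : ∀ l, a (l + 1) = (3 * a l - b l) / 4)
    (hb : ∀ l, b (l + 1) = (b l - a l) / 2) :
    ∀ l, a l = (2 * 4 ^ l + 1) / (6 * 4 ^ l) ∧ b l = -((4 ^ l - 1) / (3 * 4 ^ l)) := by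
  intro l
  obtain ⟨hal, hbl⟩ := iqp1_recurrence_closed_form_general ha hb l
  rw [hal, hbl, ha0, hb0]
  constructor <;> field_simp <;> ring
end

section
/- Let m, n ∈ ℕ and for α ∈ ℝ let S(α) be the 2^m × 2^n complex matrix (rows indexed by {0,1}^m, columns by {0,1}^n) whose (x,y) entry is 1 if x and y are both the all-zeros string, e^{iα} if x and y are both the all-ones string, and 0 otherwise. Let f : ℝ → ℝ be differentiable. Then for every θ ∈ ℝ, each entry of the matrix-valued function θ ↦ e^{−i·f(θ)/2} · S(f(θ)) is differentiable with derivative equal to the corresponding entry of −(i·f′(θ)/2) · e^{−i·f(θ)/2} · S(f(θ) + π). -/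
open Complex

/-- The matrix of a green spider of the ZX-calculus with `n` inputs, `m` outputs
and phase `α`: `|0…0⟩⟨0…0| + e^{iα} |1…1⟩⟨1…1|`. -/
noncomputable def greenSpider (m n : ℕ) (α : ℝ) :
    Matrix (Fin m → Fin 2) (Fin n → Fin 2) ℂ :=
  Matrix.of fun x y =>
    if (∀ i, x i = 0) ∧ (∀ j, y j = 0) then 1
    else if (∀ i, x i = 1) ∧ (∀ j, y j = 1) then Complex.exp (I * α)
    else 0

theorem exp_I_mul_add_pi (z : ℂ) : exp (I * (z + Real.pi)) = -exp (I * z) := by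
  rw [mul_add, mul_comm I (Real.pi : ℂ), exp_antiperiodic]

theorem hasDerivAt_exp_mul_ofReal (c : ℂ) (α : ℝ) :
    HasDerivAt (fun t : ℝ => exp (c * t)) (c * exp (c * α)) α := by
  have hasDerivAt_exponent : HasDerivAt (fun t : ℝ => c * (t : ℂ)) c α := by
    simpa only [ofReal_one, mul_one] using (hasDerivAt_id' α).ofReal_comp.const_mul c
  simpa only [mul_comm c] using hasDerivAt_exponent.cexp

section

variable {m n : ℕ} (x : Fin m → Fin 2) (y : Fin n → Fin 2)

/-- A shift by `π` fixes the constant entries and negates the entry `e^{iα}`, so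
`S(α) - S(α + π)` isolates twice the phase-dependent part. -/
theorem hasDerivAt_greenSpider_apply (α : ℝ) :
    HasDerivAt (fun t : ℝ => greenSpider m n t x y)
      (I / 2 * (greenSpider m n α x y - greenSpider m n (α + Real.pi) x y)) α := by
  simp only [greenSpider, Matrix.of_apply]
  split_ifs
  · simpa only [sub_self, mul_zero] using hasDerivAt_const α (1 : ℂ)
  · rw [ofReal_add, exp_I_mul_add_pi]
    exact (hasDerivAt_exp_mul_ofReal I α).congr_deriv (by ring)
  · simpa only [sub_self, mul_zero] using hasDerivAt_const α (0 : ℂ)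

theorem hasDerivAt_phaseCorrected_greenSpider_apply (α : ℝ) :
    HasDerivAt (fun t : ℝ => exp (-(I * t) / 2) * greenSpider m n t x y)
      (-(I / 2) * exp (-(I * α) / 2) * greenSpider m n (α + Real.pi) x y) α := by
  have phase_eq (t : ℝ) : -(I * t) / 2 = -(I / 2) * t := by ring
  simp only [phase_eq]
  exact ((hasDerivAt_exp_mul_ofReal (-(I / 2)) α).mul
    (hasDerivAt_greenSpider_apply x y α)).congr_deriv (by ring)

theorem spider_differentiation_general {f : ℝ → ℝ} {f' θ : ℝ} (hf : HasDerivAt f f' θ) :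
    HasDerivAt
      (fun t : ℝ => exp (-(I * f t) / 2) * greenSpider m n (f t) x y)
      (-(I * f' / 2) * exp (-(I * f θ) / 2) * greenSpider m n (f θ + Real.pi) x y) θ :=
  ((hasDerivAt_phaseCorrected_greenSpider_apply x y (f θ)).scomp θ hf).congr_deriv <| by
    rw [real_smul]
    ring

end

/-- The phase-corrected spider differentiation lemma: differentiating the
phase-corrected spider `e^{−if(θ)/2} S(f(θ))` corresponds to adding `π` to the
spider phase. -/
theorem spider_differentiation (m n : ℕ) (f : ℝ → ℝ) (hf : Differentiable ℝ f)
    (θ : ℝ) (x : Fin m → Fin 2) (y : Fin n → Fin 2) :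
    HasDerivAt
      (fun t : ℝ => Complex.exp (-(I * f t) / 2) * greenSpider m n (f t) x y)
      (-(I * deriv f θ / 2) * Complex.exp (-(I * f θ) / 2) *
        greenSpider m n (f θ + Real.pi) x y) θ :=
  spider_differentiation_general x y (hf θ).hasDerivAt
end
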